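/- For all integers w, p0, p1, p2 and all nonnegative integers u, ℓ, one has G(w,u,ℓ;p0,p1+1,p2) = G(w,u,ℓ;p0,p1,p2) + q^{4p1+ℓ+4} G(w,u−1,ℓ;p0,p1,p2), where G at the second argument u−1 is interpreted as 0 when u = 0. -/

import Mathlib

open Finset

noncomputable section

/-- The field `ℚ(q)` of rational functions over `ℚ`. -/
abbrev F : Type := RatFunc ℚ

/-- The indeterminate `q`. -/
noncomputable def qq : F := RatFunc.X

/-- The quantum integer `[n]` with base `v`: `(v^n - v^(-n))/(v - v⁻¹)`. -/
noncomputable def qint (v : F) (n : ℤ) : F := (v ^ n - v ^ (-n)) / (v - v⁻¹)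

/-- The quantum factorial `[m]! = [1][2]⋯[m]` with base `v`. -/
noncomputable def qfact (v : F) (m : ℕ) : F := ∏ k ∈ range m, qint v ((k : ℤ) + 1)

/-- The quantum binomial coefficient `C_v(n,d) = [n][n-1]⋯[n-d+1]/[d]!` for `d ≥ 0`,
and `0` for `d < 0`. -/
noncomputable def qbinom (v : F) (n d : ℤ) : F :=
  if d < 0 then 0
  else (∏ k ∈ range d.toNat, qint v (n - (k : ℤ))) / qfact v d.toNat

/-- The function `G(w,u,ℓ;p0,p1,p2)` of [CLW, (5.1)]. -/
noncomputable def G (w : ℤ) (u ℓ : ℕ) (p0 p1 p2 : ℤ) : F :=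
  (-1 : F) ^ w * qq ^ ((u : ℤ) ^ 2 - w * (u : ℤ) + (ℓ : ℤ) * (u : ℤ)) *
  ((∑ c ∈ range (u + 1), ∑ e ∈ range (u + 1 - c), ∑ t ∈ range (ℓ + 1),
      (let r : ℕ := u - c - e;
       if Even ((t : ℤ) + w - (r : ℤ)) then
         qq ^ (-(t : ℤ) * ((ℓ : ℤ) + (u : ℤ) - 1) - (u : ℤ) * ((c : ℤ) + (e : ℤ)) + 2 * (c : ℤ)
               + (r : ℤ) * p0 + 2 * (c : ℤ) * p1 + 2 * (e : ℤ) * p2)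
           * qbinom qq (ℓ : ℤ) (t : ℤ) * qbinom qq (w + (t : ℤ) + p0) (r : ℤ)
           * qbinom (qq ^ 2) ((w + (t : ℤ) - (r : ℤ)) / 2 + p1) (c : ℤ)
           * qbinom (qq ^ 2) ((w + (t : ℤ) - (r : ℤ)) / 2 + p2) (e : ℤ)
       else 0))
  - (∑ c ∈ range (u + 1), ∑ e ∈ range (u + 1 - c), ∑ t ∈ range (ℓ + 1),
      (let r : ℕ := u - c - e;
       if ¬ Even ((t : ℤ) + w - (r : ℤ)) then
         qq ^ (-(t : ℤ) * ((ℓ : ℤ) + (u : ℤ) - 1) - ((u : ℤ) - 1) * ((c : ℤ) + (e : ℤ))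
               + (r : ℤ) * p0 + 2 * (c : ℤ) * p1 + 2 * (e : ℤ) * p2)
           * qbinom qq (ℓ : ℤ) (t : ℤ) * qbinom qq (w + (t : ℤ) + p0) (r : ℤ)
           * qbinom (qq ^ 2) (1 + (w + (t : ℤ) - (r : ℤ) - 1) / 2 + p1) (c : ℤ)
           * qbinom (qq ^ 2) ((w + (t : ℤ) - (r : ℤ) - 1) / 2 + p2) (e : ℤ)
       else 0)))

lemma qq_ne_zero : qq ≠ 0 := RatFunc.X_ne_zero

lemma qq_pow_ne_one (m : ℕ) (hm : m ≠ 0) : qq ^ m ≠ 1 := by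
  intro h
  have h2 : algebraMap (Polynomial ℚ) (RatFunc ℚ) (Polynomial.X ^ m) =
      algebraMap (Polynomial ℚ) (RatFunc ℚ) 1 := by
    rw [map_pow, RatFunc.algebraMap_X, map_one]; exact h
  have h3 := RatFunc.algebraMap_injective ℚ h2
  have h4 := congrArg Polynomial.natDegree h3
  rw [Polynomial.natDegree_X_pow, Polynomial.natDegree_one] at h4
  exact hm h4

lemma zpow_sub_inv_ne (m : ℕ) (hm : m ≠ 0) : (qq ^ 2) ^ (m : ℤ) - (qq ^ 2) ^ (-(m : ℤ)) ≠ 0 := by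
  intro h
  have hv : (qq ^ 2) ^ m ≠ 0 := pow_ne_zero _ (pow_ne_zero _ qq_ne_zero)
  rw [zpow_neg, zpow_natCast, sub_eq_zero] at h
  have h1 : (qq ^ 2) ^ m * (qq ^ 2) ^ m = 1 := by
    nth_rewrite 2 [h]
    exact mul_inv_cancel₀ hv
  apply qq_pow_ne_one (2 * m + 2 * m) (by omega)
  rw [← h1, ← pow_mul, ← pow_add]

lemma qint_ne (k : ℕ) : qint (qq ^ 2) ((k : ℤ) + 1) ≠ 0 := by
  have h1 := zpow_sub_inv_ne (k + 1) (by omega)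
  have h2 := zpow_sub_inv_ne 1 (by omega)
  unfold qint
  apply div_ne_zero
  · push_cast at h1; exact h1
  · simpa using h2

lemma qfact_ne (m : ℕ) : qfact (qq ^ 2) m ≠ 0 := by
  unfold qfact
  exact Finset.prod_ne_zero_iff.mpr fun k _ => qint_ne k

lemma qint_rel (v : F) (hv : v ≠ 0) (n c : ℤ) :
    v ^ (c + 1) * qint v (n + 1) = qint v (n - c) + v ^ (n + 1) * qint v (c + 1) := by
  unfold qint
  rw [← mul_div_assoc, ← mul_div_assoc, ← add_div]
  congr 1
  rw [mul_sub, mul_sub, ← zpow_add₀ hv, ← zpow_add₀ hv, ← zpow_add₀ hv, ← zpow_add₀ hv]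
  rw [show c + 1 + -(n + 1) = -(n - c) by ring, show n + 1 + -(c + 1) = n - c by ring,
    show n + 1 + (c + 1) = c + 1 + (n + 1) by ring]
  ring

lemma qbinom_nat (v : F) (n : ℤ) (c : ℕ) :
    qbinom v n (c : ℤ) = (∏ k ∈ range c, qint v (n - (k : ℤ))) / qfact v c := by
  unfold qbinom
  rw [if_neg (by omega), Int.toNat_natCast]

lemma qbinom_zero' (v : F) (n : ℤ) : qbinom v n ((0 : ℕ) : ℤ) = 1 := by
  rw [qbinom_nat]; simp [qfact]

lemma pascal (n : ℤ) (c : ℕ) :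
    (qq ^ 2) ^ ((c : ℤ) + 1) * qbinom (qq ^ 2) (n + 1) ((c + 1 : ℕ) : ℤ)
      = qbinom (qq ^ 2) n ((c + 1 : ℕ) : ℤ)
        + (qq ^ 2) ^ (n + 1) * qbinom (qq ^ 2) n (c : ℤ) := by
  have hv : (qq ^ 2) ≠ 0 := pow_ne_zero _ qq_ne_zero
  rw [qbinom_nat, qbinom_nat, qbinom_nat]
  have hf : qfact (qq ^ 2) (c + 1) = qfact (qq ^ 2) c * qint (qq ^ 2) ((c : ℤ) + 1) := by
    unfold qfact; rw [Finset.prod_range_succ]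
  rw [hf, Finset.prod_range_succ', Finset.prod_range_succ]
  have hp : ∀ k ∈ range c, qint (qq ^ 2) (n + 1 - ((k + 1 : ℕ) : ℤ)) = qint (qq ^ 2) (n - (k : ℤ)) := by
    intro k _; congr 1; push_cast; ring
  rw [Finset.prod_congr rfl hp]
  have h := qint_rel (qq ^ 2) hv n c
  have h1 := qint_ne c
  have h2 := qfact_ne c
  rw [show n + 1 - ((0 : ℕ) : ℤ) = n + 1 by simp]
  generalize (∏ k ∈ range c, qint (qq ^ 2) (n - (k : ℤ))) = P at *
  generalize qfact (qq ^ 2) c = f at *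
  generalize qint (qq ^ 2) ((c : ℤ) + 1) = a at *
  generalize qint (qq ^ 2) (n + 1) = b at *
  generalize qint (qq ^ 2) (n - (c : ℤ)) = d at *
  generalize (qq ^ 2) ^ ((c : ℤ) + 1) = x at *
  generalize (qq ^ 2) ^ (n + 1) = y at *
  field_simp
  linear_combination P * h

/-- Pascal with exponents in `qq`. -/
lemma pascal_q (n m E : ℤ) (c : ℕ) (hm : m = n + 1) :
    qq ^ (E + 2 * ((c : ℤ) + 1)) * qbinom (qq ^ 2) m ((c + 1 : ℕ) : ℤ)
      = qq ^ E * qbinom (qq ^ 2) n ((c + 1 : ℕ) : ℤ)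
        + qq ^ (E + 2 * n + 2) * qbinom (qq ^ 2) n (c : ℤ) := by
  have h := pascal n c
  subst hm
  have e : ∀ z : ℤ, (qq ^ 2) ^ z = qq ^ (2 * z) := by
    intro z; rw [zpow_mul]; norm_cast
  rw [e, e] at h
  rw [zpow_add₀ qq_ne_zero, show E + 2 * n + 2 = E + 2 * (n + 1) by ring, zpow_add₀ qq_ne_zero E]
  linear_combination qq ^ E * h

lemma tri (u : ℕ) (K : F) (f g h : ℕ → ℕ → F) (h0 : ∀ e, f 0 e = g 0 e)
    (h1 : ∀ c e, c + e ≤ u → f (c + 1) e = g (c + 1) e + K * h c e) :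
    ∑ c ∈ range (u + 1 + 1), ∑ e ∈ range (u + 1 + 1 - c), f c e
      = ∑ c ∈ range (u + 1 + 1), ∑ e ∈ range (u + 1 + 1 - c), g c e
        + K * ∑ c ∈ range (u + 1), ∑ e ∈ range (u + 1 - c), h c e := by
  rw [Finset.sum_range_succ' _ (u + 1), Finset.sum_range_succ' _ (u + 1)]
  have h0' : f 0 = g 0 := funext h0
  rw [h0', Finset.mul_sum, add_right_comm (∑ k ∈ range (u + 1), _ : F), ← Finset.sum_add_distrib]
  congr 1
  apply Finset.sum_congr rfl
  intro c hc
  rw [Nat.add_sub_add_right, Finset.mul_sum, ← Finset.sum_add_distrib]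
  apply Finset.sum_congr rfl
  intro e he
  rw [Finset.mem_range] at hc he
  exact h1 c e (by omega)

/-- Even summand. -/
noncomputable def evT (w : ℤ) (ℓ : ℕ) (p0 p1 p2 : ℤ) (u c e : ℕ) : F :=
  ∑ t ∈ range (ℓ + 1),
      (let r : ℕ := u - c - e;
       if Even ((t : ℤ) + w - (r : ℤ)) then
         qq ^ (-(t : ℤ) * ((ℓ : ℤ) + (u : ℤ) - 1) - (u : ℤ) * ((c : ℤ) + (e : ℤ)) + 2 * (c : ℤ)
               + (r : ℤ) * p0 + 2 * (c : ℤ) * p1 + 2 * (e : ℤ) * p2)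
           * qbinom qq (ℓ : ℤ) (t : ℤ) * qbinom qq (w + (t : ℤ) + p0) (r : ℤ)
           * qbinom (qq ^ 2) ((w + (t : ℤ) - (r : ℤ)) / 2 + p1) (c : ℤ)
           * qbinom (qq ^ 2) ((w + (t : ℤ) - (r : ℤ)) / 2 + p2) (e : ℤ)
       else 0)

/-- Odd summand. -/
noncomputable def odT (w : ℤ) (ℓ : ℕ) (p0 p1 p2 : ℤ) (u c e : ℕ) : F :=
  ∑ t ∈ range (ℓ + 1),
      (let r : ℕ := u - c - e;
       if ¬ Even ((t : ℤ) + w - (r : ℤ)) then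
         qq ^ (-(t : ℤ) * ((ℓ : ℤ) + (u : ℤ) - 1) - ((u : ℤ) - 1) * ((c : ℤ) + (e : ℤ))
               + (r : ℤ) * p0 + 2 * (c : ℤ) * p1 + 2 * (e : ℤ) * p2)
           * qbinom qq (ℓ : ℤ) (t : ℤ) * qbinom qq (w + (t : ℤ) + p0) (r : ℤ)
           * qbinom (qq ^ 2) (1 + (w + (t : ℤ) - (r : ℤ) - 1) / 2 + p1) (c : ℤ)
           * qbinom (qq ^ 2) ((w + (t : ℤ) - (r : ℤ) - 1) / 2 + p2) (e : ℤ)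
       else 0)

lemma G_eq (w : ℤ) (u ℓ : ℕ) (p0 p1 p2 : ℤ) : G w u ℓ p0 p1 p2 =
  (-1 : F) ^ w * qq ^ ((u : ℤ) ^ 2 - w * (u : ℤ) + (ℓ : ℤ) * (u : ℤ)) *
  ((∑ c ∈ range (u + 1), ∑ e ∈ range (u + 1 - c), evT w ℓ p0 p1 p2 u c e)
   - (∑ c ∈ range (u + 1), ∑ e ∈ range (u + 1 - c), odT w ℓ p0 p1 p2 u c e)) := rfl

lemma evT_zero (w : ℤ) (ℓ : ℕ) (p0 p1 p2 : ℤ) (u e : ℕ) :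
    evT w ℓ p0 (p1 + 1) p2 u 0 e = evT w ℓ p0 p1 p2 u 0 e := by
  unfold evT
  simp only [qbinom_zero']
  simp only [Nat.cast_zero, mul_zero, zero_mul]

lemma odT_zero (w : ℤ) (ℓ : ℕ) (p0 p1 p2 : ℤ) (u e : ℕ) :
    odT w ℓ p0 (p1 + 1) p2 u 0 e = odT w ℓ p0 p1 p2 u 0 e := by
  unfold odT
  simp only [qbinom_zero']
  simp only [Nat.cast_zero, mul_zero, zero_mul]

lemma term_rel (X' X x k n m : ℤ) (c : ℕ) (A B D : F) (hm : m = n + 1)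
    (h1 : X' = X + 2 * ((c : ℤ) + 1)) (h2 : k + x = X + 2 * n + 2) :
    qq ^ X' * A * B * qbinom (qq ^ 2) m ((c + 1 : ℕ) : ℤ) * D
      = qq ^ X * A * B * qbinom (qq ^ 2) n ((c + 1 : ℕ) : ℤ) * D
        + qq ^ k * (qq ^ x * A * B * qbinom (qq ^ 2) n (c : ℤ) * D) := by
  have h := pascal_q n m X c hm
  rw [← h1, ← h2, zpow_add₀ qq_ne_zero] at h
  linear_combination A * B * D * h

lemma evT_succ (w : ℤ) (ℓ : ℕ) (p0 p1 p2 : ℤ) (u c e : ℕ) (hce : c + e ≤ u) :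
    evT w ℓ p0 (p1 + 1) p2 (u + 1) (c + 1) e = evT w ℓ p0 p1 p2 (u + 1) (c + 1) e
      + qq ^ (4 * p1 + 3 - 2 * (u : ℤ) + w) * evT w ℓ p0 p1 p2 u c e := by
  unfold evT
  rw [Finset.mul_sum, ← Finset.sum_add_distrib]
  apply Finset.sum_congr rfl
  intro t _
  obtain ⟨r, hr⟩ : ∃ r, r = u - c - e := ⟨_, rfl⟩
  have hr2 : u + 1 - (c + 1) - e = r := by omega
  have hu : (u : ℤ) = c + e + r := by omega
  simp only [hr2, ← hr]
  split_ifs with hE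
  · obtain ⟨z, hz⟩ := hE
    apply term_rel
    · ring
    · push_cast; ring
    · have hd : (w + (t : ℤ) - (r : ℤ)) / 2 = z := by omega
      have hw : w = z + z - t + r := by omega
      rw [hd, hw]
      push_cast
      rw [hu]
      ring
  · simp

lemma odT_succ (w : ℤ) (ℓ : ℕ) (p0 p1 p2 : ℤ) (u c e : ℕ) (hce : c + e ≤ u) :
    odT w ℓ p0 (p1 + 1) p2 (u + 1) (c + 1) e = odT w ℓ p0 p1 p2 (u + 1) (c + 1) e
      + qq ^ (4 * p1 + 3 - 2 * (u : ℤ) + w) * odT w ℓ p0 p1 p2 u c e := by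
  unfold odT
  rw [Finset.mul_sum, ← Finset.sum_add_distrib]
  apply Finset.sum_congr rfl
  intro t _
  obtain ⟨r, hr⟩ : ∃ r, r = u - c - e := ⟨_, rfl⟩
  have hr2 : u + 1 - (c + 1) - e = r := by omega
  have hu : (u : ℤ) = c + e + r := by omega
  simp only [hr2, ← hr]
  by_cases hE : Even ((t : ℤ) + w - (r : ℤ))
  · simp [hE]
  · rw [if_pos hE, if_pos hE, if_pos hE]
    rw [Int.not_even_iff_odd] at hE
    obtain ⟨z, hz⟩ := hE
    apply term_rel
    · ring
    · push_cast; ring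
    · have hd : (w + (t : ℤ) - (r : ℤ) - 1) / 2 = z := by omega
      have hw : w = 2 * z + 1 - t + r := by omega
      rw [hd, hw]
      push_cast
      rw [hu]
      ring

/-- Recursion in `p1`:
`G(w,u,ℓ;p0,p1+1,p2) = G(w,u,ℓ;p0,p1,p2) + q^{4p1+ℓ+4} G(w,u−1,ℓ;p0,p1,p2)`,
where the term with second argument `u−1` is interpreted as `0` when `u = 0`. -/
theorem G_rec_p1 (w p0 p1 p2 : ℤ) (u ℓ : ℕ) :
    G w u ℓ p0 (p1 + 1) p2
      = G w u ℓ p0 p1 p2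
        + qq ^ (4 * p1 + (ℓ : ℤ) + 4) * (if u = 0 then 0 else G w (u - 1) ℓ p0 p1 p2) := by
  rcases u with _ | u
  · rw [if_pos rfl, mul_zero, add_zero]
    unfold G
    simp [qbinom, qfact]
  rw [if_neg (Nat.succ_ne_zero u), Nat.add_sub_cancel]
  have hK : qq ^ (4 * p1 + (ℓ : ℤ) + 4) * qq ^ ((u : ℤ) ^ 2 - w * (u : ℤ) + (ℓ : ℤ) * (u : ℤ))
      = qq ^ (((u + 1 : ℕ) : ℤ) ^ 2 - w * ((u + 1 : ℕ) : ℤ) + (ℓ : ℤ) * ((u + 1 : ℕ) : ℤ))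
        * qq ^ (4 * p1 + 3 - 2 * (u : ℤ) + w) := by
    rw [← zpow_add₀ qq_ne_zero, ← zpow_add₀ qq_ne_zero]
    congr 1; push_cast; ring
  rw [G_eq, G_eq, G_eq]
  rw [tri u _ _ _ _ (evT_zero w ℓ p0 p1 p2 (u + 1)) (evT_succ w ℓ p0 p1 p2 u),
    tri u _ _ _ _ (odT_zero w ℓ p0 p1 p2 (u + 1)) (odT_succ w ℓ p0 p1 p2 u)]
  linear_combination (-(-1 : F) ^ w *
    ((∑ c ∈ range (u + 1), ∑ e ∈ range (u + 1 - c), evT w ℓ p0 p1 p2 u c e)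
      - (∑ c ∈ range (u + 1), ∑ e ∈ range (u + 1 - c), odT w ℓ p0 p1 p2 u c e))) * hK

end
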